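/- Let E be a finite-dimensional real inner product space, U ⊆ E a nonempty open set, φ : U → ℂⁿ a C² map with components φ^k = u^k + i v^k, V ⊆ ℂⁿ an open set with φ(U) ⊆ V, and ψ : V → ℂ a holomorphic function. Then for every x ∈ U: Δ(ψ∘φ)(x) = Σ_{k=1}^{n} (∂ψ/∂z_k)(φ(x)) · Δφ^k(x) + Σ_{k,l=1}^{n} (∂²ψ/∂z_k∂z_l)(φ(x)) · Q_{kl}(x), where Δ is the Laplacian applied separately to real and imaginary parts, Δφ^k := Δu^k + iΔv^k, ∂/∂z_k denotes the complex partial derivative, and Q_{kl}(x) := (⟨∇u^k(x), ∇u^l(x)⟩ − ⟨∇v^k(x), ∇v^l(x)⟩) + i(⟨∇u^k(x), ∇v^l(x)⟩ + ⟨∇v^k(x), ∇u^l(x)⟩). -/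

import Mathlib

/-!
Let `b` be an orthonormal basis of `E`. The second-order chain rule, with the derivatives of `ψ`
taken over `ℂ` and those of `φ` over `ℝ`, reads
`D²(ψ ∘ φ)(v, v) = Dψ(D²φ(v, v)) + D²ψ(Dφ v, Dφ v)`; its sum over `v = b i` is the claim, since
Parseval's identity turns the gradient products of the statement into
`Qₖₗ = ∑ᵢ ∂ᵢφᵏ ∂ᵢφˡ`.

That a holomorphic `ψ` of several variables is smooth follows by induction once each directional
derivative `∂ᵥψ` is known to be holomorphic. The Schwarz lemma, applied on complex lines, shows
that the holomorphic difference quotients of `ψ` converge to `∂ᵥψ` locally uniformly, and it also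
bounds derivatives by values, so that the derivatives of a uniformly convergent sequence of
holomorphic maps converge uniformly as well.
-/

open scoped RealInnerProductSpace

/-- The Laplacian of a real-valued function on an inner product space:
the trace of the derivative of the gradient (i.e. of the second derivative). -/
noncomputable def lap {E : Type*} [NormedAddCommGroup E] [InnerProductSpace ℝ E]
    [CompleteSpace E] (f : E → ℝ) (x : E) : ℝ :=
  LinearMap.trace ℝ E (fderiv ℝ (gradient f) x : E →ₗ[ℝ] E)

/-- A real-valued function is harmonic on an open set `W` if it is `C²` there and its
Laplacian vanishes identically on `W`. -/
def HarmonicOn {E : Type*} [NormedAddCommGroup E] [InnerProductSpace ℝ E]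
    [CompleteSpace E] (f : E → ℝ) (W : Set E) : Prop :=
  ContDiffOn ℝ 2 f W ∧ ∀ x ∈ W, lap f x = 0

/-- Pseudo-horizontally weakly conformal map into `ℂⁿ`, on a set `U`. -/
def PHWCOn {E : Type*} [NormedAddCommGroup E] [InnerProductSpace ℝ E] [CompleteSpace E]
    {n : ℕ} (φ : E → (Fin n → ℂ)) (U : Set E) : Prop :=
  ∀ A B : Fin n, ∀ x ∈ U,
    ⟪gradient (fun y => (φ y A).re) x, gradient (fun y => (φ y B).re) x⟫ -
      ⟪gradient (fun y => (φ y A).im) x, gradient (fun y => (φ y B).im) x⟫ = 0 ∧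
    ⟪gradient (fun y => (φ y A).im) x, gradient (fun y => (φ y B).re) x⟫ +
      ⟪gradient (fun y => (φ y A).re) x, gradient (fun y => (φ y B).im) x⟫ = 0

/-- Pseudo harmonic morphism into `ℂⁿ` on a set `U`: a `C²` map which is harmonic
(the real and imaginary parts of each component are harmonic) and
pseudo-horizontally weakly conformal. -/
def PHMOn {E : Type*} [NormedAddCommGroup E] [InnerProductSpace ℝ E] [CompleteSpace E]
    {n : ℕ} (φ : E → (Fin n → ℂ)) (U : Set E) : Prop :=
  ContDiffOn ℝ 2 φ U ∧
  (∀ k : Fin n, HarmonicOn (fun y => (φ y k).re) U ∧ HarmonicOn (fun y => (φ y k).im) U) ∧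
  PHWCOn φ U

section Holomorphic

open Filter Metric Set Topology
open scoped ContDiff

variable {W F : Type*} [NormedAddCommGroup W] [NormedSpace ℂ W]
  [NormedAddCommGroup F] [NormedSpace ℂ F]

lemma uniformCauchySeqOn_fderiv_ball {κ : Type*} {l : Filter κ} {f : κ → W → F} {c : W} {r R : ℝ}
    (hf : UniformCauchySeqOn f l (ball c R)) (hd : ∀ᶠ n in l, DifferentiableOn ℂ (f n) (ball c R))
    (hr : r < R) : UniformCauchySeqOn (fun n => fderiv ℂ (f n)) l (ball c r) := by
  intro u hu
  obtain ⟨ε, hε, hεu⟩ := Metric.mem_uniformity_dist.1 hu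
  have hρ : 0 < R - r := sub_pos.2 hr
  let δ := ε * (R - r) / 4
  have hδ0 : 0 < δ := by positivity
  filter_upwards [hf _ (Metric.dist_mem_uniformity hδ0), hd.prod_mk hd]
    with ⟨m, n⟩ hclose ⟨hm, hn⟩ z hz
  have hsub : ball z (R - r) ⊆ ball c R := ball_subset_ball' (by linarith [mem_ball.1 hz])
  have hsmall : ∀ w ∈ ball z (R - r), ‖(f m - f n) w‖ < δ := fun w hw => by
    simpa [dist_eq_norm] using hclose w (hsub hw)
  have hmaps : MapsTo (f m - f n) (ball z (R - r)) (closedBall ((f m - f n) z) (2 * δ)) := by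
    intro w hw
    rw [mem_closedBall, dist_eq_norm]
    linarith [norm_sub_le ((f m - f n) w) ((f m - f n) z), hsmall w hw,
      hsmall z (mem_ball_self hρ)]
  have hfderiv : fderiv ℂ (f m) z - fderiv ℂ (f n) z = fderiv ℂ (f m - f n) z := by
    have hz' : ball c R ∈ 𝓝 z := isOpen_ball.mem_nhds (hsub (mem_ball_self hρ))
    exact (fderiv_sub (hm.differentiableAt hz') (hn.differentiableAt hz')).symm
  refine hεu ?_
  calc dist (fderiv ℂ (f m) z) (fderiv ℂ (f n) z) = ‖fderiv ℂ (f m - f n) z‖ := by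
        rw [dist_eq_norm, hfderiv]
    _ ≤ 2 * δ / (R - r) :=
        Complex.norm_fderiv_le_div_of_mapsTo_ball ((hm.sub hn).mono hsub) hmaps hρ
    _ = ε / 2 := by simp only [δ]; field_simp; norm_num
    _ < ε := half_lt_self hε

theorem differentiableOn_of_tendstoUniformlyOn [CompleteSpace F] {κ : Type*} {l : Filter κ}
    [l.NeBot] {f : κ → W → F} {g : W → F} {V : Set W} (hf : TendstoUniformlyOn f g l V)
    (hd : ∀ᶠ n in l, DifferentiableOn ℂ (f n) V) (hV : IsOpen V) : DifferentiableOn ℂ g V := by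
  intro z hz
  obtain ⟨R, hR, hRV⟩ := Metric.isOpen_iff.1 hV z hz
  have hcauchy : UniformCauchySeqOn (fun n => fderiv ℂ (f n)) l (ball z (R / 2)) :=
    uniformCauchySeqOn_fderiv_ball (hf.mono hRV).uniformCauchySeqOn
      (hd.mono fun n hn => hn.mono hRV) (half_lt_self hR)
  have hlimit : ∀ w ∈ ball z (R / 2), ∃ T, Tendsto (fun n => fderiv ℂ (f n) w) l (𝓝 T) :=
    fun w hw => cauchy_map_iff_exists_tendsto.1 (hcauchy.cauchy_map hw)
  choose! g' hg' using hlimit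
  have hlim : TendstoUniformlyOnFilter (fun n => fderiv ℂ (f n)) g' l (𝓝 z) :=
    (hcauchy.tendstoUniformlyOn_of_tendsto hg').tendstoUniformlyOnFilter.mono_right
      (le_principal_iff.2 (ball_mem_nhds z (half_pos hR)))
  have hderiv : ∀ᶠ p in l ×ˢ 𝓝 z, HasFDerivAt (f p.1) (fderiv ℂ (f p.1) p.2) p.2 := by
    filter_upwards [hd.prod_mk (hV.eventually_mem hz)] with p ⟨hp, hpV⟩
    exact (hp.differentiableAt (hV.mem_nhds hpV)).hasFDerivAt
  have hpoint : ∀ᶠ w in 𝓝 z, Tendsto (fun n => f n w) l (𝓝 (g w)) :=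
    (hV.eventually_mem hz).mono fun w hw => hf.tendsto_at hw
  exact (hasFDerivAt_of_tendstoUniformlyOnFilter hlim hderiv hpoint).differentiableAt
    |>.differentiableWithinAt

lemma dist_dslope_deriv_le [CompleteSpace F] {g : ℂ → F} {c z : ℂ} {R M : ℝ}
    (hd : DifferentiableOn ℂ g (ball c R)) (hmaps : MapsTo g (ball c R) (closedBall (g c) M))
    (hz : z ∈ ball c R) : dist (dslope g c z) (deriv g c) ≤ 2 * (M / R) / R * dist z c := by
  have hR : 0 < R := nonempty_ball.1 ⟨z, hz⟩
  have hbound : ∀ w ∈ ball c R, ‖dslope g c w‖ ≤ M / R := fun w hw =>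
    Complex.norm_dslope_le_div_of_mapsTo_ball hd hmaps hw
  rw [← dslope_same]
  refine Complex.dist_le_div_mul_dist_of_mapsTo_ball
    ((Complex.differentiableOn_dslope (ball_mem_nhds c hR)).2 hd) (fun w hw => ?_) hz
  rw [mem_closedBall, dist_eq_norm]
  linarith [norm_sub_le (dslope g c w) (dslope g c c), hbound w hw, hbound c (mem_ball_self hR)]

lemma dist_smul_sub_lineDeriv_le [CompleteSpace F] {ψ : W → F} {z v : W} {ρ M : ℝ} {h : ℂ}
    (hd : DifferentiableOn ℂ (fun ζ : ℂ => ψ (z + ζ • v)) (ball 0 ρ))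
    (hmaps : MapsTo (fun ζ : ℂ => ψ (z + ζ • v)) (ball 0 ρ) (closedBall (ψ z) M))
    (hh : h ∈ ball 0 ρ) (hh0 : h ≠ 0) :
    dist (h⁻¹ • (ψ (z + h • v) - ψ z)) (lineDeriv ℂ ψ z v) ≤ 2 * (M / ρ) / ρ * dist h 0 := by
  have hmaps' : MapsTo (fun ζ : ℂ => ψ (z + ζ • v)) (ball 0 ρ)
      (closedBall (ψ (z + (0 : ℂ) • v)) M) := by simpa only [zero_smul, add_zero] using hmaps
  simpa [dslope_of_ne _ hh0, slope_def_module, lineDeriv] using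
    dist_dslope_deriv_le hd hmaps' hh

lemma tendstoUniformlyOn_smul_sub_lineDeriv [CompleteSpace F] {ψ : W → F} {c : W} {r R : ℝ}
    (hd : DifferentiableOn ℂ ψ (ball c R)) (hb : Bornology.IsBounded (ψ '' ball c R)) (hr : r < R)
    (v : W) :
    TendstoUniformlyOn (fun (h : ℂ) z => h⁻¹ • (ψ (z + h • v) - ψ z))
      (fun z => lineDeriv ℂ ψ z v) (𝓝[≠] 0) (ball c r) := by
  let ρ := (R - r) / (‖v‖ + 1)
  have hρ0 : 0 < ρ := div_pos (sub_pos.2 hr) (by positivity)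
  have hmem : ∀ z ∈ ball c r, ∀ ζ ∈ ball (0 : ℂ) ρ, z + ζ • v ∈ ball c R := by
    intro z hz ζ hζ
    have hζv : ‖ζ‖ * ‖v‖ < R - r :=
      calc ‖ζ‖ * ‖v‖ ≤ ρ * ‖v‖ := by gcongr; exact (mem_ball_zero_iff.1 hζ).le
        _ < ρ * (‖v‖ + 1) := by gcongr; exact lt_add_one _
        _ = R - r := div_mul_cancel₀ _ (by positivity)
    have hdist : dist (z + ζ • v) z = ‖ζ‖ * ‖v‖ := by rw [dist_self_add_left, norm_smul]
    rw [mem_ball] at hz ⊢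
    linarith [dist_triangle (z + ζ • v) z c]
  let M := diam (ψ '' ball c R)
  have hquot : ∀ z ∈ ball c r, ∀ h ∈ ball (0 : ℂ) ρ, h ≠ 0 →
      dist (h⁻¹ • (ψ (z + h • v) - ψ z)) (lineDeriv ℂ ψ z v) ≤ 2 * (M / ρ) / ρ * dist h 0 := by
    intro z hz h hh hh0
    refine dist_smul_sub_lineDeriv_le (hd.comp (by fun_prop) fun ζ hζ => hmem z hz ζ hζ)
      (fun ζ hζ => dist_le_diam_of_mem hb (mem_image_of_mem ψ (hmem z hz ζ hζ)) ?_) hh hh0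
    exact mem_image_of_mem ψ (ball_subset_ball hr.le hz)
  rw [Metric.tendstoUniformlyOn_iff]
  intro ε hε
  have hlim : Tendsto (fun h : ℂ => 2 * (M / ρ) / ρ * dist h 0) (𝓝 0) (𝓝 0) :=
    Continuous.tendsto' (by fun_prop) _ _ (by simp)
  filter_upwards [nhdsWithin_le_nhds (hlim.eventually_lt_const hε),
    nhdsWithin_le_nhds (ball_mem_nhds 0 hρ0), self_mem_nhdsWithin] with h hsmall hball hne z hz
  rw [dist_comm]
  exact (hquot z hz h hball hne).trans_lt hsmall

theorem differentiableOn_fderiv_apply [CompleteSpace F] {ψ : W → F} {V : Set W}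
    (hψ : DifferentiableOn ℂ ψ V) (hV : IsOpen V) (v : W) :
    DifferentiableOn ℂ (fun z => fderiv ℂ ψ z v) V := by
  intro z hz
  obtain ⟨R, hR, hRV, hb⟩ :
      ∃ R > 0, ball z R ⊆ V ∧ Bornology.IsBounded (ψ '' ball z R) := by
    have hclose : ∀ᶠ w in 𝓝 z, ψ w ∈ ball (ψ z) 1 :=
      (hψ.continuousOn.continuousAt (hV.mem_nhds hz)).eventually (ball_mem_nhds _ one_pos)
    obtain ⟨R, hR, h⟩ := Metric.eventually_nhds_iff_ball.1 ((hV.eventually_mem hz).and hclose)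
    exact ⟨R, hR, fun w hw => (h w hw).1,
      isBounded_ball.subset (image_subset_iff.2 fun w hw => (h w hw).2)⟩
  have hd : DifferentiableOn ℂ ψ (ball z R) := hψ.mono hRV
  have hquot : ∀ᶠ h : ℂ in 𝓝[≠] 0,
      DifferentiableOn ℂ (fun w => h⁻¹ • (ψ (w + h • v) - ψ w)) (ball z (R / 2)) := by
    have hsmall : ∀ᶠ h : ℂ in 𝓝 0, ‖h • v‖ < R / 2 :=
      Continuous.tendsto' (by fun_prop) _ 0 (by simp) |>.eventually_lt_const (half_pos hR)
    filter_upwards [nhdsWithin_le_nhds hsmall] with h hh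
    have hshift : MapsTo (fun w => w + h • v) (ball z (R / 2)) (ball z R) := fun w hw => by
      rw [mem_ball] at hw
      calc dist (w + h • v) z ≤ dist (w + h • v) w + dist w z := dist_triangle _ _ _
        _ = ‖h • v‖ + dist w z := by rw [dist_self_add_left]
        _ < R := by linarith
    exact ((hd.comp (by fun_prop) hshift).sub
      (hd.mono (ball_subset_ball (half_le_self hR.le)))).const_smul _
  have hline := differentiableOn_of_tendstoUniformlyOn
    (tendstoUniformlyOn_smul_sub_lineDeriv hd hb (half_lt_self hR) v) hquot isOpen_ball
  have hhalf := ball_mem_nhds z (half_pos hR)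
  refine ((hline.differentiableAt hhalf).congr_of_eventuallyEq ?_).differentiableWithinAt
  filter_upwards [hhalf] with w hw
  exact (hψ.differentiableAt (hV.mem_nhds
    (hRV (ball_subset_ball (half_le_self hR.le) hw)))).lineDeriv_eq_fderiv.symm

theorem contDiffOn_infty_of_differentiableOn [CompleteSpace F] [FiniteDimensional ℂ W] {ψ : W → F}
    {V : Set W} (hψ : DifferentiableOn ℂ ψ V) (hV : IsOpen V) : ContDiffOn ℂ ∞ ψ V := by
  refine contDiffOn_infty.2 fun n => ?_
  induction n generalizing ψ with
  | zero => exact contDiffOn_zero.2 hψ.continuousOn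
  | succ n ih =>
    push_cast
    refine (contDiffOn_succ_iff_fderiv_of_isOpen hV).2 ⟨hψ, by simp, ?_⟩
    exact contDiffOn_clm_apply.2 fun v => ih (differentiableOn_fderiv_apply hψ hV v)

end Holomorphic

section SecondDerivative

open Topology

variable {𝕜 𝕜' E W F : Type*} [NontriviallyNormedField 𝕜] [NontriviallyNormedField 𝕜']
  [NormedAlgebra 𝕜 𝕜'] [NormedAddCommGroup E] [NormedSpace 𝕜 E]
  [NormedAddCommGroup W] [NormedSpace 𝕜 W] [NormedSpace 𝕜' W] [IsScalarTower 𝕜 𝕜' W]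
  [NormedAddCommGroup F] [NormedSpace 𝕜 F] [NormedSpace 𝕜' F] [IsScalarTower 𝕜 𝕜' F]

lemma differentiableAt_fderiv {φ : E → W} {x : E} (hφ : ContDiffAt 𝕜 2 φ x) :
    DifferentiableAt 𝕜 (fderiv 𝕜 φ) x :=
  (hφ.fderiv_right (m := 1) (by norm_num)).differentiableAt one_ne_zero

theorem iteratedFDeriv_two_comp {φ : E → W} {ψ : W → F} {x : E} (hφ : ContDiffAt 𝕜 2 φ x)
    (hψ : ContDiffAt 𝕜' 2 ψ (φ x)) (v w : E) :
    iteratedFDeriv 𝕜 2 (fun y => ψ (φ y)) x ![v, w] =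
      fderiv 𝕜' ψ (φ x) (iteratedFDeriv 𝕜 2 φ x ![v, w]) +
        iteratedFDeriv 𝕜' 2 ψ (φ x) ![fderiv 𝕜 φ x v, fderiv 𝕜 φ x w] := by
  have hφd : ∀ᶠ y in 𝓝 x, DifferentiableAt 𝕜 φ y :=
    (hφ.eventually (by simp)).mono fun y hy => hy.differentiableAt two_ne_zero
  have hψd : ∀ᶠ y in 𝓝 x, DifferentiableAt 𝕜' ψ (φ y) :=
    hφ.continuousAt.eventually
      ((hψ.eventually (by simp)).mono fun z hz => hz.differentiableAt two_ne_zero)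
  have hfirst : fderiv 𝕜 (fun y => ψ (φ y)) =ᶠ[𝓝 x]
      fun y => ((fderiv 𝕜' ψ (φ y)).restrictScalars 𝕜).comp (fderiv 𝕜 φ y) := by
    filter_upwards [hφd, hψd] with y hy hy'
    exact ((hy'.hasFDerivAt.restrictScalars 𝕜).comp y hy.hasFDerivAt).fderiv
  have hDψφ : HasFDerivAt (fun y => (fderiv 𝕜' ψ (φ y)).restrictScalars 𝕜)
      ((ContinuousLinearMap.restrictScalarsL 𝕜' W F 𝕜 𝕜).comp
        (((fderiv 𝕜' (fderiv 𝕜' ψ) (φ x)).restrictScalars 𝕜).comp (fderiv 𝕜 φ x))) x :=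
    (ContinuousLinearMap.restrictScalarsL 𝕜' W F 𝕜 𝕜).hasFDerivAt.comp x
      (((differentiableAt_fderiv hψ).hasFDerivAt.restrictScalars 𝕜).comp x
        hφd.self_of_nhds.hasFDerivAt)
  simp only [iteratedFDeriv_two_apply, Matrix.cons_val_zero, Matrix.cons_val_one]
  rw [hfirst.fderiv_eq, (hDψφ.clm_comp (differentiableAt_fderiv hφ).hasFDerivAt).fderiv]
  simp

lemma iteratedFDeriv_two_pi_apply {ι : Type*} [Fintype ι] [DecidableEq ι] {ψ : (ι → 𝕜) → F}
    {p : ι → 𝕜} (hψ : ContDiffAt 𝕜 2 ψ p) (a c : ι → 𝕜) :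
    iteratedFDeriv 𝕜 2 ψ p ![a, c] = ∑ k, ∑ l,
      (c k * a l) • fderiv 𝕜 (fun z => fderiv 𝕜 ψ z (Pi.single k 1)) p (Pi.single l 1) := by
  have hpartial : ∀ v w,
      fderiv 𝕜 (fun z => fderiv 𝕜 ψ z v) p w = fderiv 𝕜 (fderiv 𝕜 ψ) p w v := fun v w => by
    simp [fderiv_clm_apply (differentiableAt_fderiv hψ) (differentiableAt_const v)]
  conv_lhs => rw [iteratedFDeriv_two_apply, pi_eq_sum_univ' a, pi_eq_sum_univ' c]
  simp only [hpartial, Matrix.cons_val_zero, Matrix.cons_val_one, map_sum, map_smul,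
    _root_.sum_apply, _root_.smul_apply, Finset.smul_sum, mul_smul]

lemma sum_iteratedFDeriv_two_pi {ι κ : Type*} [Fintype ι] [DecidableEq ι] [Fintype κ]
    {ψ : (ι → 𝕜) → 𝕜} {p : ι → 𝕜} (hψ : ContDiffAt 𝕜 2 ψ p) (a : κ → ι → 𝕜) :
    ∑ i, iteratedFDeriv 𝕜 2 ψ p ![a i, a i] = ∑ k, ∑ l,
      fderiv 𝕜 (fun z => fderiv 𝕜 ψ z (Pi.single k 1)) p (Pi.single l 1) *
        ∑ i, a i k * a i l := by
  simp only [iteratedFDeriv_two_pi_apply hψ, smul_eq_mul, Finset.mul_sum]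
  rw [Finset.sum_comm]
  refine Finset.sum_congr rfl fun k _ => ?_
  rw [Finset.sum_comm]
  simp only [mul_comm]

end SecondDerivative

section ComplexValued

variable {E : Type*} [NormedAddCommGroup E] [InnerProductSpace ℝ E] [CompleteSpace E]

/-- The Laplacian `Δu + iΔv` of a complex-valued function `u + iv`. -/
noncomputable def complexLap (g : E → ℂ) (x : E) : ℂ :=
  (lap (fun y => (g y).re) x : ℂ) + (lap (fun y => (g y).im) x : ℂ) * Complex.I

/-- The complex-bilinear (not sesquilinear) extension of `⟨∇u, ∇v⟩` to complex-valued functions;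
the quantity `Qₖₗ` is its value at two components of a map into `ℂⁿ`. -/
noncomputable def complexGradInner (f g : E → ℂ) (x : E) : ℂ :=
  ((⟪gradient (fun y => (f y).re) x, gradient (fun y => (g y).re) x⟫ -
      ⟪gradient (fun y => (f y).im) x, gradient (fun y => (g y).im) x⟫ : ℝ) : ℂ) +
    ((⟪gradient (fun y => (f y).re) x, gradient (fun y => (g y).im) x⟫ +
      ⟪gradient (fun y => (f y).im) x, gradient (fun y => (g y).re) x⟫ : ℝ) : ℂ) * Complex.I

end ComplexValued

section Laplacian

open InnerProductSpace Laplacian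

variable {E : Type*} [NormedAddCommGroup E] [InnerProductSpace ℝ E] [FiniteDimensional ℝ E]
  {κ : Type*} [Fintype κ]

lemma differentiableAt_gradient {f : E → ℝ} {x : E} (hf : DifferentiableAt ℝ (fderiv ℝ f) x) :
    DifferentiableAt ℝ (gradient f) x := by
  let b := stdOrthonormalBasis ℝ E
  have hgrad : gradient f = fun y => ∑ i, fderiv ℝ f y (b i) • b i := by
    ext1 y
    rw [← b.sum_repr' (gradient f y)]
    simp
  rw [hgrad]
  fun_prop

lemma lap_eq_laplacian {f : E → ℝ} {x : E} (hf : DifferentiableAt ℝ (fderiv ℝ f) x) :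
    lap f x = Δ f x := by
  have hinner : ∀ v w : E, ⟪v, fderiv ℝ (gradient f) x w⟫ = fderiv ℝ (fderiv ℝ f) x w v := by
    intro v w
    have h₁ := fderiv_inner_apply ℝ (differentiableAt_const v) (differentiableAt_gradient hf) w
    have h₂ := congr($(fderiv_clm_apply hf (differentiableAt_const v)) w)
    simpa [h₂] using h₁.symm
  rw [lap, LinearMap.trace_eq_sum_inner _ (stdOrthonormalBasis ℝ E),
    laplacian_eq_iteratedFDeriv_stdOrthonormalBasis]
  simp [iteratedFDeriv_two_apply, hinner]

lemma complexLap_eq_laplacian {g : E → ℂ} {x : E} (hg : ContDiffAt ℝ 2 g x) :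
    complexLap g x = Δ g x := by
  have hpart : ∀ L : ℂ →L[ℝ] ℝ, lap (fun y => L (g y)) x = L (Δ g x) := fun L =>
    have hLg : ContDiffAt ℝ 2 (fun y => L (g y)) x := L.contDiff.contDiffAt.comp x hg
    (lap_eq_laplacian (differentiableAt_fderiv hLg)).trans hg.laplacian_CLM_comp_left
  have hre := hpart Complex.reCLM
  have him := hpart Complex.imCLM
  simp only [Complex.reCLM_apply, Complex.imCLM_apply] at hre him
  rw [complexLap, hre, him, Complex.re_add_im]

lemma complexGradInner_eq_sum (b : OrthonormalBasis κ ℝ E) {f g : E → ℂ} {x : E}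
    (hf : DifferentiableAt ℝ f x) (hg : DifferentiableAt ℝ g x) :
    complexGradInner f g x = ∑ i, fderiv ℝ f x (b i) * fderiv ℝ g x (b i) := by
  have hparseval : ∀ u w : E → ℝ, ⟪gradient u x, gradient w x⟫ =
      ∑ i, fderiv ℝ u x (b i) * fderiv ℝ w x (b i) := fun u w => by
    rw [← b.sum_inner_mul_inner]
    simp
  have hcomp : ∀ (L : ℂ →L[ℝ] ℝ) {h : E → ℂ}, DifferentiableAt ℝ h x → ∀ v,
      fderiv ℝ (fun y => L (h y)) x v = L (fderiv ℝ h x v) := fun L h hh v =>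
    congr($((L.hasFDerivAt.comp x hh.hasFDerivAt).fderiv) v)
  have hre := fun {h} => hcomp Complex.reCLM (h := h)
  have him := fun {h} => hcomp Complex.imCLM (h := h)
  simp only [Complex.reCLM_apply, Complex.imCLM_apply] at hre him
  simp only [complexGradInner, hparseval, hre hf, hre hg, him hf, him hg]
  simp [Complex.ext_iff, Finset.sum_sub_distrib, Finset.sum_add_distrib]

theorem laplacian_comp_eq_sum (b : OrthonormalBasis κ ℝ E) {𝕜 W F : Type*}
    [NontriviallyNormedField 𝕜] [NormedAlgebra ℝ 𝕜]
    [NormedAddCommGroup W] [NormedSpace ℝ W] [NormedSpace 𝕜 W] [IsScalarTower ℝ 𝕜 W]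
    [NormedAddCommGroup F] [NormedSpace ℝ F] [NormedSpace 𝕜 F] [IsScalarTower ℝ 𝕜 F]
    {φ : E → W} {ψ : W → F} {x : E} (hφ : ContDiffAt ℝ 2 φ x) (hψ : ContDiffAt 𝕜 2 ψ (φ x)) :
    Δ (fun y => ψ (φ y)) x = fderiv 𝕜 ψ (φ x) (Δ φ x) +
      ∑ i, iteratedFDeriv 𝕜 2 ψ (φ x) ![fderiv ℝ φ x (b i), fderiv ℝ φ x (b i)] := by
  simp only [laplacian_eq_iteratedFDeriv_orthonormalBasis _ b, iteratedFDeriv_two_comp hφ hψ,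
    Finset.sum_add_distrib, map_sum]

theorem complexLap_comp {ι : Type*} [Fintype ι] [DecidableEq ι] {φ : E → ι → ℂ} {ψ : (ι → ℂ) → ℂ}
    {x : E} (hφ : ContDiffAt ℝ 2 φ x) (hψ : ContDiffAt ℂ 2 ψ (φ x)) :
    complexLap (fun y => ψ (φ y)) x =
      ∑ k, fderiv ℂ ψ (φ x) (Pi.single k 1) * complexLap (fun y => φ y k) x +
      ∑ k, ∑ l, fderiv ℂ (fun z => fderiv ℂ ψ z (Pi.single k 1)) (φ x) (Pi.single l 1) *
        complexGradInner (fun y => φ y k) (fun y => φ y l) x := by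
  let b := stdOrthonormalBasis ℝ E
  have hφk : ∀ k, ContDiffAt ℝ 2 (fun y => φ y k) x := contDiffAt_pi.1 hφ
  have hφd : DifferentiableAt ℝ φ x := hφ.differentiableAt two_ne_zero
  have hψφ : ContDiffAt ℝ 2 (fun y => ψ (φ y)) x := (hψ.restrict_scalars ℝ).comp x hφ
  have hlap : ∀ k, complexLap (fun y => φ y k) x = Δ φ x k := fun k => by
    rw [complexLap_eq_laplacian (hφk k)]
    let π : (ι → ℂ) →L[ℝ] ℂ := ContinuousLinearMap.proj k
    exact hφ.laplacian_CLM_comp_left (l := π)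
  have hgrad : ∀ k l, complexGradInner (fun y => φ y k) (fun y => φ y l) x =
      ∑ i, fderiv ℝ φ x (b i) k * fderiv ℝ φ x (b i) l := fun k l => by
    simp only [complexGradInner_eq_sum b ((hφk k).differentiableAt two_ne_zero)
      ((hφk l).differentiableAt two_ne_zero), fderiv_apply hφd,
      ContinuousLinearMap.comp_apply, ContinuousLinearMap.proj_apply]
  have hfirst : fderiv ℂ ψ (φ x) (Δ φ x) =
      ∑ k, fderiv ℂ ψ (φ x) (Pi.single k 1) * Δ φ x k := by
    conv_lhs => rw [pi_eq_sum_univ' (Δ φ x)]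
    simp only [map_sum, map_smul, smul_eq_mul, mul_comm]
  rw [complexLap_eq_laplacian hψφ, laplacian_comp_eq_sum b hφ hψ, hfirst,
    sum_iteratedFDeriv_two_pi hψ]
  simp only [hlap, hgrad]

end Laplacian

/-- The chain-rule identity for the Laplacian of the composition of a `C²` map
`φ : U → ℂⁿ` with a holomorphic function `ψ` defined on an open set containing `φ(U)`:
`Δ(ψ∘φ) = Σₖ (∂ψ/∂zₖ)(φ) Δφᵏ + Σₖₗ (∂²ψ/∂zₖ∂zₗ)(φ) Qₖₗ`, where
`Qₖₗ = (⟨∇uᵏ,∇uˡ⟩ − ⟨∇vᵏ,∇vˡ⟩) + i(⟨∇uᵏ,∇vˡ⟩ + ⟨∇vᵏ,∇uˡ⟩)`. -/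
theorem lap_comp_holom {E : Type*} [NormedAddCommGroup E]
    [InnerProductSpace ℝ E] [FiniteDimensional ℝ E] {n : ℕ}
    (U : Set E) (hU : IsOpen U) (hUne : U.Nonempty)
    (φ : E → (Fin n → ℂ)) (hφ : ContDiffOn ℝ 2 φ U)
    (V : Set (Fin n → ℂ)) (hV : IsOpen V) (hmaps : Set.MapsTo φ U V)
    (ψ : (Fin n → ℂ) → ℂ) (hψ : DifferentiableOn ℂ ψ V)
    (x : E) (hx : x ∈ U) :
    (lap (fun y => (ψ (φ y)).re) x : ℂ) + (lap (fun y => (ψ (φ y)).im) x : ℂ) * Complex.I =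
    (∑ k : Fin n, fderiv ℂ ψ (φ x) (Pi.single k 1) *
      ((lap (fun y => (φ y k).re) x : ℂ) + (lap (fun y => (φ y k).im) x : ℂ) * Complex.I)) +
    ∑ k : Fin n, ∑ l : Fin n,
      fderiv ℂ (fun z => fderiv ℂ ψ z (Pi.single k 1)) (φ x) (Pi.single l 1) *
      (((⟪gradient (fun y => (φ y k).re) x, gradient (fun y => (φ y l).re) x⟫ -
          ⟪gradient (fun y => (φ y k).im) x, gradient (fun y => (φ y l).im) x⟫ : ℝ) : ℂ) +
        ((⟪gradient (fun y => (φ y k).re) x, gradient (fun y => (φ y l).im) x⟫ +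
          ⟪gradient (fun y => (φ y k).im) x, gradient (fun y => (φ y l).re) x⟫ : ℝ) : ℂ) *
          Complex.I) := by
  have hψx : ContDiffAt ℂ 2 ψ (φ x) :=
    ((contDiffOn_infty_of_differentiableOn hψ hV).contDiffAt (hV.mem_nhds (hmaps hx))).of_le
      (by norm_cast)
  exact complexLap_comp (hφ.contDiffAt (hU.mem_nhds hx)) hψx
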